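/- Fix N > 0, Γ > 0, V ≥ 0 and r ∈ ℝ. Set C(Γ) = ½ log(1 + Γ/N), C'(Γ) = 1/(2(Γ+N)), and V(Γ) = (Γ² + 2ΓN)/(2(N+Γ)²). Let p₁, p₂, p₃ ≥ 0 with p₁+p₂+p₃ = 1 and π₁, π₂, π₃ ∈ ℝ satisfy Σⱼ pⱼπⱼ = r/√V(Γ) and Σⱼ pⱼπⱼ² − (r/√V(Γ))² ≤ C'(Γ)²·V / V(Γ). For each n, set Γⱼ⁽ⁿ⁾ = Γ − (√V(Γ)/(C'(Γ)√n))·πⱼ + r/(C'(Γ)√n) (positive for all sufficiently large n), and let Pₙ = Σⱼ pⱼ · Unif(S^{n−1}_{√(nΓⱼ⁽ⁿ⁾)}) be the mixture of the uniform distributions on the spheres of radii √(nΓⱼ⁽ⁿ⁾) in ℝⁿ. Let X ~ Pₙ, Z ~ N(0, N·Iₙ) independent, Y = X + Z, w(y|x) = (2πN)^{-n/2} exp(−‖y−x‖²/(2N)), and qₙ(y) = ∫ w(y|x) dPₙ(x). Then limsup_{n→∞} Pr( (1/n)·log( w(Y|X)/qₙ(Y) ) ≤ C(Γ) + r/√n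 ) ≤ Σⱼ pⱼ·Φ(πⱼ), where Φ is the standard normal CDF. -/

import Mathlib

open Real MeasureTheory ProbabilityTheory

/-- `UniformSphereFamily σ`: `σ n R` is, for every `n ≥ 1` and `R > 0`, the unique
rotation-invariant (uniform) Borel probability measure on the sphere of radius `R`
in `ℝⁿ`. -/
def UniformSphereFamily (σ : ∀ n : ℕ, ℝ → Measure (Fin n → ℝ)) : Prop :=
  ∀ (n : ℕ), 1 ≤ n → ∀ R : ℝ, 0 < R →
    IsProbabilityMeasure (σ n R) ∧
    σ n R ({x : Fin n → ℝ | ∑ i, (x i)^2 = R^2})ᶜ = 0 ∧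
    ∀ A : Matrix (Fin n) (Fin n) ℝ, A * A.transpose = 1 →
      (σ n R).map (A.mulVec) = σ n R

/-- The `n`-letter AWGN transition density `w(y|x)` with noise variance `N`. -/
noncomputable def w (N : ℝ) (n : ℕ) (y x : Fin n → ℝ) : ℝ :=
  (2 * π * N) ^ (-(n : ℝ)/2) * Real.exp (-(∑ i, (y i - x i)^2) / (2 * N))

/-- The standard normal CDF `Φ`. -/
noncomputable def Phi (r : ℝ) : ℝ := ((gaussianReal 0 1) (Set.Iic r)).toReal

/-- `Γⱼ⁽ⁿ⁾ = Γ − (√V(Γ)/(C'(Γ)√n))·πⱼ + r/(C'(Γ)√n)`. -/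
noncomputable def GammaJ (Γ VΓ Cp r πj : ℝ) (n : ℕ) : ℝ :=
  Γ - (Real.sqrt VΓ / (Cp * Real.sqrt n)) * πj + r / (Cp * Real.sqrt n)

/-- The mixture input distribution `Pₙ = Σⱼ pⱼ · Unif(S^{n−1}_{√(nΓⱼ⁽ⁿ⁾)})`. -/
noncomputable def Pmix (σ : ∀ n : ℕ, ℝ → Measure (Fin n → ℝ))
    (Γ VΓ Cp r : ℝ) (p πv : Fin 3 → ℝ) (n : ℕ) : Measure (Fin n → ℝ) :=
  ∑ j, ENNReal.ofReal (p j) • σ n (Real.sqrt (n * GammaJ Γ VΓ Cp r (πv j) n))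

open Real MeasureTheory ProbabilityTheory

lemma aux_orth_exists {n : ℕ} (u v : Fin n → ℝ) (h : u ⬝ᵥ u = v ⬝ᵥ v) :
    ∃ A : Matrix (Fin n) (Fin n) ℝ, A * A.transpose = 1 ∧ A.mulVec u = v := by
  by_cases huv : u = v
  · exact ⟨1, by simp, by simp [huv]⟩
  set a := u - v with ha
  have ha0 : a ⬝ᵥ a ≠ 0 := by
    intro h0
    exact huv (sub_eq_zero.mp (dotProduct_self_eq_zero.mp h0))
  have hau : a ⬝ᵥ a = 2 * (a ⬝ᵥ u) := by
    simp only [ha, sub_dotProduct, dotProduct_sub]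
    rw [dotProduct_comm v u, ← h]; ring
  refine ⟨1 - (2 / (a ⬝ᵥ a)) • Matrix.vecMulVec a a, ?_, ?_⟩
  · have hT : (1 - (2 / (a ⬝ᵥ a)) • Matrix.vecMulVec a a).transpose
        = 1 - (2 / (a ⬝ᵥ a)) • Matrix.vecMulVec a a := by
      simp [Matrix.transpose_vecMulVec]
    rw [hT]
    have hsq : Matrix.vecMulVec a a * Matrix.vecMulVec a a = (a ⬝ᵥ a) • Matrix.vecMulVec a a := by
      rw [Matrix.vecMulVec_mul_vecMulVec]
      ext i j; simp [Matrix.vecMulVec_apply]; ring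
    simp only [sub_mul, mul_sub, one_mul, mul_one, smul_mul_assoc, mul_smul_comm, hsq, smul_smul,
      smul_sub]
    rw [show 2 / (a ⬝ᵥ a) * (2 / (a ⬝ᵥ a) * (a ⬝ᵥ a)) = 2 / (a ⬝ᵥ a) + 2 / (a ⬝ᵥ a) by
      field_simp; ring, add_smul]
    abel
  · rw [Matrix.sub_mulVec, Matrix.one_mulVec, Matrix.smul_mulVec, Matrix.vecMulVec_mulVec]
    ext i
    simp
    have : 2 / (a ⬝ᵥ a) * (a ⬝ᵥ u) = 1 := by rw [hau]; rw [hau] at ha0; have h3 := right_ne_zero_of_mul ha0; field_simp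
    have h2 : 2 / (a ⬝ᵥ a) * ((a ⬝ᵥ u) * a i) = a i := by linear_combination (a i) * this
    rw [h2]; simp [ha]

lemma aux_orth_dot {n : ℕ} (A : Matrix (Fin n) (Fin n) ℝ) (hA : A * A.transpose = 1)
    (u v : Fin n → ℝ) : A.mulVec u ⬝ᵥ A.mulVec v = u ⬝ᵥ v := by
  have hA' : A.transpose * A = 1 := mul_eq_one_comm.mp hA
  rw [Matrix.dotProduct_mulVec, ← Matrix.mulVec_transpose, Matrix.mulVec_mulVec, hA']
  simp

lemma aux_gauss_rot {n : ℕ} (v : NNReal) (A : Matrix (Fin n) (Fin n) ℝ)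
    (hA : A * A.transpose = 1) :
    (Measure.pi fun _ : Fin n => gaussianReal 0 v).map A.mulVec
      = Measure.pi fun _ : Fin n => gaussianReal 0 v := by
  have hm : Measurable A.mulVec := by
    apply Continuous.measurable
    exact Continuous.matrix_mulVec continuous_const continuous_id
  have key : ∀ t : Fin n → ℝ, ∏ i, charFun (gaussianReal 0 v) (t i)
      = Complex.exp (- v * (t ⬝ᵥ t : ℝ) / 2) := by
    intro t
    simp only [charFun_gaussianReal, ← Complex.exp_sum]
    congr 1
    have : (∑ i, t i * t i : ℝ) = t ⬝ᵥ t := rfl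
    rw [← this]
    push_cast
    rw [Finset.mul_sum, Finset.sum_div]
    refine Finset.sum_congr rfl fun i _ => ?_
    simp; ring
  have : IsProbabilityMeasure ((Measure.pi fun _ : Fin n => gaussianReal 0 v).map A.mulVec) :=
    Measure.isProbabilityMeasure_map hm.aemeasurable
  rw [← charFun_eq_pi_iff]
  intro t
  rw [key]
  have h2 := key (A.transpose.mulVec t.ofLp)
  rw [aux_orth_dot _ (by simpa using mul_eq_one_comm.mp hA)] at h2
  have h3 := charFun_pi (μ := fun _ : Fin n => gaussianReal 0 v)
    (WithLp.toLp 2 (A.transpose.mulVec t.ofLp))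
  simp only at h3
  rw [h2] at h3
  rw [← h3]
  rw [charFun_apply, charFun_apply, integral_map, integral_map, integral_map]
  · congr 1; ext x; congr 2
    simp only [EuclideanSpace.inner_eq_star_dotProduct]
    simp [Matrix.dotProduct_mulVec, Matrix.mulVec_transpose, dotProduct_comm]
  all_goals fun_prop

lemma aux_moments (v : NNReal) : (∫ x, x^2 ∂gaussianReal 0 v = v) ∧ (∫ x, x^3 ∂gaussianReal 0 v = 0)
    ∧ (∫ x, x^4 ∂gaussianReal 0 v = 3*v^2) := by
  have h := fun k : ℕ => iteratedDeriv_mgf_zero (X := id) (μ := gaussianReal 0 v)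
    (by simp [integrableExpSet_id_gaussianReal]) k
  rw [mgf_id_gaussianReal] at h
  set f : ℝ → ℝ := fun t => rexp (0 * t + v * t^2/2) with hf
  have d0 : ∀ t, HasDerivAt f (v * t * f t) t := by
    intro t
    have := ((((hasDerivAt_id t).const_mul (0:ℝ)).add
      ((((hasDerivAt_id t).pow 2).const_mul (v:ℝ)).div_const 2))).exp
    refine this.congr_deriv ?_
    simp only [hf, Pi.add_apply, Pi.pow_apply, id]; push_cast; ring
  have i1 : iteratedDeriv 1 f = fun t => v * t * f t := by
    rw [iteratedDeriv_one]; ext t; exact (d0 t).deriv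
  have i2 : iteratedDeriv 2 f = fun t => (v + v^2*t^2) * f t := by
    rw [iteratedDeriv_succ, i1]; ext t
    have := ((hasDerivAt_id t).const_mul (v:ℝ)).mul (d0 t)
    refine (this.congr_deriv ?_).deriv
    simp; ring
  have i3 : iteratedDeriv 3 f = fun t => (3*v^2*t + v^3*t^3) * f t := by
    rw [iteratedDeriv_succ, i2]; ext t
    have := ((((hasDerivAt_id t).pow 2).const_mul ((v:ℝ)^2)).const_add (v:ℝ)).mul (d0 t)
    refine (this.congr_deriv ?_).deriv
    simp; ring
  have i4 : iteratedDeriv 4 f = fun t => (3*v^2 + 6*v^3*t^2+v^4*t^4) * f t := by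
    rw [iteratedDeriv_succ, i3]; ext t
    have := ((((hasDerivAt_id t)).const_mul (3*(v:ℝ)^2)).add
      (((hasDerivAt_id t).pow 3).const_mul ((v:ℝ)^3))).mul (d0 t)
    refine (this.congr_deriv ?_).deriv
    simp; ring
  have h2 := h 2
  have h3 := h 3
  have h4 := h 4
  rw [i2] at h2
  rw [i3] at h3
  rw [i4] at h4
  simp [hf] at h2 h3 h4
  exact ⟨h2.symm, h3.symm, h4.symm⟩

lemma aux_clt (ν : Measure ℝ) [IsProbabilityMeasure ν] (g : ℝ → ℝ) (hg : Measurable g)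
    (h0 : ∫ x, g x ∂ν = 0) (h1 : ∫ x, (g x)^2 ∂ν = 1) (E : Set ℝ) (hE : MeasurableSet E)
    (hfr : gaussianReal 0 1 (frontier E) = 0) :
    Filter.Tendsto (fun n : ℕ => (Measure.pi fun _ : Fin n => ν)
      {z | (√n)⁻¹ * ∑ i, g (z i) ∈ E}) Filter.atTop (nhds (gaussianReal 0 1 E)) := by
  set P := Measure.infinitePi (fun _ : ℕ => ν) with hP
  have hev : ∀ i : ℕ, MeasurePreserving (fun x : ℕ → ℝ => x i) P ν := fun i =>
    measurePreserving_eval_infinitePi (fun _ : ℕ => ν) i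
  have hid : ∀ i : ℕ, IdentDistrib (fun x : ℕ → ℝ => g (x i)) (fun x => g (x 0)) P P := by
    intro i
    have : IdentDistrib (fun x : ℕ → ℝ => x i) (fun x => x 0) P P :=
      ⟨(hev i).measurable.aemeasurable, (hev 0).measurable.aemeasurable, by rw [(hev i).map_eq, (hev 0).map_eq]⟩
    exact this.comp hg
  have clt := tendstoInDistribution_inv_sqrt_mul_sum (P := P) (P' := gaussianReal 0 1)
    (X := fun i x => g (x i)) (Y := id) HasLaw.id
    (by rw [← h0, ← (hev 0).map_eq, integral_map (hev 0).measurable.aemeasurable (by fun_prop)])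
    (by
      simp only [Pi.pow_apply]
      rw [← h1, ← (hev 0).map_eq, integral_map (hev 0).measurable.aemeasurable (by fun_prop)])
    (iIndepFun_infinitePi (fun _ => hg)) hid
  have := ProbabilityMeasure.tendsto_measure_of_null_frontier_of_tendsto' clt.tendsto (E := E)
    (by simpa using hfr)
  simp only [ProbabilityMeasure.coe_mk, Measure.map_id] at this
  refine this.congr fun n => ?_
  rw [Measure.map_apply (by fun_prop) hE]
  have hmp : (Measure.pi fun _ : Fin n => ν) = P.map (fun x (i : Fin n) => x i) := by
    have := Measure.map_infinitePi_infinitePi_of_inj (P := fun _ : ℕ => ν)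
      (f := fun i : Fin n => (i : ℕ)) Fin.val_injective
    rw [hP, this, Measure.infinitePi_eq_pi]
  rw [hmp, Measure.map_apply (by fun_prop)]
  · congr 1
    ext x
    simp [Finset.sum_range]
  · exact measurableSet_preimage (by fun_prop) hE

lemma aux_inv_lintegral {n : ℕ} (μ : Measure (Fin n → ℝ))
    (hμ : ∀ A : Matrix (Fin n) (Fin n) ℝ, A * A.transpose = 1 → μ.map A.mulVec = μ)
    (F : ℝ → ℝ → ENNReal) (hF : Measurable (Function.uncurry F)) (u v : Fin n → ℝ)
    (h : u ⬝ᵥ u = v ⬝ᵥ v) :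
    ∫⁻ x, F (u ⬝ᵥ x) (x ⬝ᵥ x) ∂μ = ∫⁻ x, F (v ⬝ᵥ x) (x ⬝ᵥ x) ∂μ := by
  obtain ⟨A, hA, rfl⟩ := aux_orth_exists u v h
  have hm : Measurable A.mulVec :=
    (Continuous.matrix_mulVec continuous_const continuous_id).measurable
  have hd : ∀ u : Fin n → ℝ, Measurable fun x : Fin n → ℝ => u ⬝ᵥ x := fun u =>
    (Continuous.dotProduct continuous_const continuous_id).measurable
  have hd2 : Measurable fun x : Fin n → ℝ => x ⬝ᵥ x :=
    (Continuous.dotProduct continuous_id continuous_id).measurable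
  conv_rhs => rw [← hμ A hA]
  have hcomp : Measurable fun x : Fin n → ℝ => F (A.mulVec u ⬝ᵥ x) (x ⬝ᵥ x) :=
    hF.comp ((hd _).prodMk hd2)
  rw [lintegral_map hcomp hm]
  simp only [aux_orth_dot A hA]

lemma aux_swap {n : ℕ} (γ σ : Measure (Fin n → ℝ)) [IsProbabilityMeasure γ]
    [IsProbabilityMeasure σ]
    (hγ : ∀ A : Matrix (Fin n) (Fin n) ℝ, A * A.transpose = 1 → γ.map A.mulVec = γ)
    (hσ : ∀ A : Matrix (Fin n) (Fin n) ℝ, A * A.transpose = 1 → σ.map A.mulVec = σ)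
    (R : ℝ) (hR : 0 < R) (hs : ∀ᵐ x ∂σ, x ⬝ᵥ x = R^2)
    (F : ℝ → ℝ → ENNReal) (hF : Measurable (Function.uncurry F)) (y : Fin n → ℝ) :
    ∫⁻ G, F (y ⬝ᵥ G) (G ⬝ᵥ G) ∂γ
      = ∫⁻ G, ∫⁻ x, F (√(G ⬝ᵥ G) / R * (y ⬝ᵥ x)) (G ⬝ᵥ G) ∂σ ∂γ := by
  have hnn : ∀ u : Fin n → ℝ, 0 ≤ u ⬝ᵥ u := fun u =>
    Finset.sum_nonneg fun i _ => mul_self_nonneg (u i)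
  have h1 : ∫⁻ G, F (y ⬝ᵥ G) (G ⬝ᵥ G) ∂γ
      = ∫⁻ x, ∫⁻ G, F (((√(y ⬝ᵥ y) / R) • x) ⬝ᵥ G) (G ⬝ᵥ G) ∂γ ∂σ := by
    rw [← mul_one (∫⁻ G, F (y ⬝ᵥ G) (G ⬝ᵥ G) ∂γ), ← measure_univ (μ := σ), ← lintegral_const]
    refine lintegral_congr_ae ?_
    filter_upwards [hs] with x hx
    refine aux_inv_lintegral γ hγ F hF _ _ ?_
    rw [smul_dotProduct, dotProduct_smul, hx, smul_eq_mul, smul_eq_mul]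
    have := Real.mul_self_sqrt (hnn y)
    field_simp
    nlinarith
  rw [h1, lintegral_lintegral_swap]
  · refine lintegral_congr fun G => ?_
    have h2 : ∀ x : Fin n → ℝ, F (((√(y ⬝ᵥ y) / R) • x) ⬝ᵥ G) (G ⬝ᵥ G)
        = (fun s _ => F s (G ⬝ᵥ G)) (((√(y ⬝ᵥ y) / R) • G) ⬝ᵥ x) (x ⬝ᵥ x) := by
      intro x
      simp only [smul_dotProduct]
      rw [dotProduct_comm x G]
    have h3 : ∀ x : Fin n → ℝ, F (√(G ⬝ᵥ G) / R * (y ⬝ᵥ x)) (G ⬝ᵥ G)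
        = (fun s _ => F s (G ⬝ᵥ G)) (((√(G ⬝ᵥ G) / R) • y) ⬝ᵥ x) (x ⬝ᵥ x) := by
      intro x
      simp only [smul_dotProduct, smul_eq_mul]
    simp only [h2, h3]
    refine aux_inv_lintegral σ hσ (fun s _ => F s (G ⬝ᵥ G)) ?_ _ _ ?_
    · exact hF.comp (measurable_fst.prodMk measurable_const)
    · simp only [smul_dotProduct, dotProduct_smul, smul_eq_mul]
      have e1 := Real.mul_self_sqrt (hnn y)
      have e2 := Real.mul_self_sqrt (hnn G)
      field_simp
      rw [Real.sq_sqrt (hnn y), Real.sq_sqrt (hnn G)]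
      ring
  · apply Measurable.aemeasurable
    have hp : Measurable fun p : (Fin n → ℝ) × (Fin n → ℝ) =>
        ((((√(y ⬝ᵥ y) / R) • p.1) ⬝ᵥ p.2), (p.2 ⬝ᵥ p.2)) := by
      apply Measurable.prodMk
      · apply Continuous.measurable
        exact Continuous.dotProduct (by fun_prop) continuous_snd
      · apply Continuous.measurable
        exact Continuous.dotProduct continuous_snd continuous_snd
    exact hF.comp hp

lemma aux_exp_mono {n : ℕ} (σ : Measure (Fin n → ℝ))
    (hσ : ∀ A : Matrix (Fin n) (Fin n) ℝ, A * A.transpose = 1 → σ.map A.mulVec = σ)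
    (y : Fin n → ℝ) (N l : ℝ) (hl : 1 ≤ l) :
    ∫⁻ x, ENNReal.ofReal (rexp ((y ⬝ᵥ x) / N)) ∂σ
      ≤ ∫⁻ x, ENNReal.ofReal (rexp ((l * (y ⬝ᵥ x)) / N)) ∂σ := by
  have hc : ∀ u : Fin n → ℝ, Continuous fun x : Fin n → ℝ => u ⬝ᵥ x := fun u =>
    Continuous.dotProduct continuous_const continuous_id
  have hsym : ∀ l : ℝ, 2 * ∫⁻ x, ENNReal.ofReal (rexp ((l * (y ⬝ᵥ x)) / N)) ∂σ
      = ∫⁻ x, ENNReal.ofReal (2 * cosh (l * ((y ⬝ᵥ x) / N))) ∂σ := by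
    intro l
    have h := aux_inv_lintegral σ hσ (fun s _ => ENNReal.ofReal (rexp (l * s / N)))
      (by unfold Function.uncurry; fun_prop) y (-y) (by simp)
    rw [two_mul]
    nth_rw 2 [h]
    rw [← lintegral_add_left (by have := hc y; fun_prop)]
    refine lintegral_congr fun x => ?_
    rw [← ENNReal.ofReal_add (by positivity) (by positivity)]
    congr 1
    rw [Real.cosh_eq]
    simp only [neg_dotProduct]
    rw [show l * ((y ⬝ᵥ x) / N) = l * (y ⬝ᵥ x) / N by ring,
      show l * -(y ⬝ᵥ x) / N = -(l * (y ⬝ᵥ x) / N) by ring]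
    ring
  have h1 := hsym 1
  have h2 := hsym l
  simp only [one_mul] at h1
  have h3 : 2 * ∫⁻ x, ENNReal.ofReal (rexp ((y ⬝ᵥ x) / N)) ∂σ
      ≤ 2 * ∫⁻ x, ENNReal.ofReal (rexp ((l * (y ⬝ᵥ x)) / N)) ∂σ := by
    rw [h1, h2]
    refine lintegral_mono fun x => ?_
    apply ENNReal.ofReal_le_ofReal
    have : cosh ((y ⬝ᵥ x) / N) ≤ cosh (l * ((y ⬝ᵥ x) / N)) := by
      rw [Real.cosh_le_cosh, abs_mul]
      have := abs_nonneg ((y ⬝ᵥ x) / N)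
      have h2 : 1 ≤ |l| := hl.trans (le_abs_self l)
      nlinarith
    linarith
  exact (ENNReal.mul_le_mul_iff_right (by simp) (by simp)).mp h3

lemma aux_key {n : ℕ} (γ σ : Measure (Fin n → ℝ)) [IsProbabilityMeasure γ]
    [IsProbabilityMeasure σ]
    (hγ : ∀ A : Matrix (Fin n) (Fin n) ℝ, A * A.transpose = 1 → γ.map A.mulVec = γ)
    (hσ : ∀ A : Matrix (Fin n) (Fin n) ℝ, A * A.transpose = 1 → σ.map A.mulVec = σ)
    (R : ℝ) (hR : 0 < R) (hs : ∀ᵐ x ∂σ, x ⬝ᵥ x = R^2) (N : ℝ) (hN : 0 < N) (δ : ℝ)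
    (y : Fin n → ℝ) :
    γ {G | G ⬝ᵥ G ∈ Set.Icc (R^2) (R^2+δ)} * ∫⁻ x, ENNReal.ofReal (rexp ((y ⬝ᵥ x) / N)) ∂σ
      ≤ ENNReal.ofReal (rexp ((R^2+δ)/(2*N))) *
        ∫⁻ G, ENNReal.ofReal (rexp ((y ⬝ᵥ G) / N - (G ⬝ᵥ G) / (2*N))) ∂γ := by
  set W := Set.Icc (R^2) (R^2+δ) with hW
  have hq : Measurable fun x : Fin n → ℝ => x ⬝ᵥ x :=
    (Continuous.dotProduct continuous_id continuous_id).measurable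
  have hc : ∀ u : Fin n → ℝ, Continuous fun x : Fin n → ℝ => u ⬝ᵥ x := fun u =>
    Continuous.dotProduct continuous_const continuous_id
  have hWm : MeasurableSet {G : Fin n → ℝ | G ⬝ᵥ G ∈ W} := hq measurableSet_Icc
  set F : ℝ → ℝ → ENNReal := fun s t => W.indicator (fun _ => ENNReal.ofReal (rexp (s/N))) t
    with hFdef
  have hF : Measurable (Function.uncurry F) := by
    have : Function.uncurry F = (Prod.snd ⁻¹' W).indicator
        (fun p : ℝ × ℝ => ENNReal.ofReal (rexp (p.1/N))) := by
      ext p; simp [Function.uncurry, hFdef, Set.indicator]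
    rw [this]
    exact Measurable.indicator (by fun_prop) (measurable_snd measurableSet_Icc)
  have hsw := aux_swap γ σ hγ hσ R hR hs F hF y
  calc _ ≤ ∫⁻ G, ∫⁻ x, F (√(G ⬝ᵥ G) / R * (y ⬝ᵥ x)) (G ⬝ᵥ G) ∂σ ∂γ := by
        rw [mul_comm, ← lintegral_indicator_const hWm]
        refine lintegral_mono fun G => ?_
        by_cases hG : G ⬝ᵥ G ∈ W
        · simp only [Set.indicator, Set.mem_ofPred_eq, hG, if_true, hFdef]
          apply aux_exp_mono σ hσ
          rw [one_le_div hR]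
          apply Real.le_sqrt_of_sq_le
          exact hG.1
        · simp [Set.indicator, hG]
    _ = ∫⁻ G, F (y ⬝ᵥ G) (G ⬝ᵥ G) ∂γ := hsw.symm
    _ ≤ _ := by
        rw [← lintegral_const_mul _ (by have := hc y; fun_prop)]
        refine lintegral_mono fun G => ?_
        by_cases hG : G ⬝ᵥ G ∈ W
        · simp only [Set.indicator, hG, if_true, hFdef]
          rw [← ENNReal.ofReal_mul (by positivity), ← Real.exp_add]
          apply ENNReal.ofReal_le_ofReal
          apply Real.exp_le_exp.mpr
          have : (G ⬝ᵥ G)/(2*N) ≤ (R^2+δ)/(2*N) := by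
            have := hG.2
            gcongr
          linarith
        · simp [hFdef, Set.indicator, hG]

lemma aux_gint_one (N Γ a : ℝ) (hN : 0 < N) (hΓ : 0 < Γ) :
    ∫ x, rexp (a * x / N - x * x / (2*N)) ∂gaussianReal 0 Γ.toNNReal
      = √(N/(Γ+N)) * rexp (Γ * (a*a) / (2*N*(Γ+N))) := by
  have hv : Γ.toNNReal ≠ 0 := by simpa using hΓ
  rw [integral_gaussianReal_eq_integral_smul hv]
  set v' : NNReal := (Γ*N/(Γ+N)).toNNReal with hv'
  have hpos : 0 < Γ*N/(Γ+N) := by positivity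
  have hv0 : v' ≠ 0 := by rw [hv']; simpa using hpos
  have hc' : (v' : ℝ) = Γ*N/(Γ+N) := Real.coe_toNNReal _ hpos.le
  have : ∀ x, gaussianPDFReal 0 Γ.toNNReal x • rexp (a * x / N - x * x / (2*N))
      = (√(N/(Γ+N)) * rexp (Γ * (a*a) / (2*N*(Γ+N)))) * gaussianPDFReal (a*Γ/(Γ+N)) v' x := by
    intro x
    simp only [gaussianPDFReal, hc', Real.coe_toNNReal _ hΓ.le, smul_eq_mul]
    have e1 : √(2*π*(Γ*N/(Γ+N))) = √(2*π*Γ) * √(N/(Γ+N)) := by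
      rw [← Real.sqrt_mul (by positivity)]; congr 1; ring
    rw [e1]
    have p1 : 0 < √(2*π*Γ) := by positivity
    have p2 : 0 < √(N/(Γ+N)) := by positivity
    have e2 : rexp (-(x-0)^2/(2*Γ)) * rexp (a * x / N - x * x / (2*N))
       = rexp (Γ * (a*a) / (2*N*(Γ+N))) * rexp (-(x - a*Γ/(Γ+N))^2/(2*(Γ*N/(Γ+N)))) := by
      rw [← Real.exp_add, ← Real.exp_add]; congr 1
      field_simp; ring
    rw [mul_assoc, e2]
    field_simp
  simp only [this]
  rw [integral_const_mul, integral_gaussianPDFReal_eq_one _ hv0, mul_one]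

lemma aux_gint {n : ℕ} (N Γ : ℝ) (hN : 0 < N) (hΓ : 0 < Γ) (y : Fin n → ℝ) :
    ∫⁻ G, ENNReal.ofReal (rexp ((y ⬝ᵥ G) / N - (G ⬝ᵥ G) / (2*N)))
        ∂(Measure.pi fun _ : Fin n => gaussianReal 0 Γ.toNNReal)
      = ENNReal.ofReal (√(N/(Γ+N))^n * rexp (Γ * (y ⬝ᵥ y) / (2*N*(Γ+N)))) := by
  have hprod : ∀ G : Fin n → ℝ, rexp ((y ⬝ᵥ G) / N - (G ⬝ᵥ G) / (2*N))
      = ∏ i, rexp (y i * G i / N - G i * G i / (2*N)) := by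
    intro G
    rw [← Real.exp_sum]; simp [dotProduct, Finset.sum_div]
  simp only [hprod]
  rw [← ofReal_integral_eq_lintegral_ofReal]
  · congr 1
    rw [integral_fintype_prod_eq_prod (fun i x => rexp (y i * x / N - x * x / (2*N)))]
    simp only [aux_gint_one N Γ _ hN hΓ]
    rw [Finset.prod_mul_distrib, ← Real.exp_sum]
    simp [dotProduct, Finset.mul_sum, Finset.sum_div]
  · apply Integrable.fintype_prod (f := fun i x => rexp (y i * x / N - x * x / (2*N)))
    intro i
    apply Integrable.of_bound (C := rexp (y i * y i / (2*N))) (by fun_prop)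
    refine Filter.Eventually.of_forall fun x => ?_
    rw [Real.norm_eq_abs, abs_of_pos (Real.exp_pos _)]
    apply Real.exp_le_exp.mpr
    rw [← sub_nonneg]
    have : y i * y i / (2*N) - (y i * x / N - x * x / (2*N)) = (y i - x)^2/(2*N) := by
      field_simp; ring
    rw [this]; positivity
  · exact Filter.Eventually.of_forall fun x => Finset.prod_nonneg fun i _ => (Real.exp_pos _).le

noncomputable def auxPhi (N Γ : ℝ) (n : ℕ) (y : Fin n → ℝ) : ℝ :=
  (2 * π * N) ^ (-(n : ℝ)/2) * (√(N/(Γ+N))^n * rexp (-(y ⬝ᵥ y) / (2*(Γ+N))))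

lemma aux_w_eq (N : ℝ) {n : ℕ} (y x : Fin n → ℝ) :
    w N n y x = (2 * π * N) ^ (-(n : ℝ)/2) *
      rexp (-((y ⬝ᵥ y) - 2 * (y ⬝ᵥ x) + (x ⬝ᵥ x)) / (2 * N)) := by
  unfold w
  congr 4
  simp only [dotProduct, Finset.mul_sum, ← Finset.sum_sub_distrib, ← Finset.sum_add_distrib]
  refine Finset.sum_congr rfl fun i _ => ?_
  ring

lemma aux_q_le {n : ℕ} (σ : Measure (Fin n → ℝ)) [IsProbabilityMeasure σ]
    (hσ : ∀ A : Matrix (Fin n) (Fin n) ℝ, A * A.transpose = 1 → σ.map A.mulVec = σ)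
    (R : ℝ) (hR : 0 < R) (hs : ∀ᵐ x ∂σ, x ⬝ᵥ x = R^2) (N Γ : ℝ) (hN : 0 < N) (hΓ : 0 < Γ)
    (δ c : ℝ) (hc : 0 < c)
    (hcW : ENNReal.ofReal c ≤ (Measure.pi fun _ : Fin n => gaussianReal 0 Γ.toNNReal)
      {G | G ⬝ᵥ G ∈ Set.Icc (R^2) (R^2+δ)})
    (y : Fin n → ℝ) :
    ∫ x, w N n y x ∂σ ≤ c⁻¹ * rexp (δ/(2*N)) * auxPhi N Γ n y := by
  have hcont : Continuous fun x : Fin n → ℝ => y ⬝ᵥ x :=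
    Continuous.dotProduct continuous_const continuous_id
  have h1 := aux_key (Measure.pi fun _ : Fin n => gaussianReal 0 Γ.toNNReal) σ
    (aux_gauss_rot _) hσ R hR hs N hN δ y
  rw [aux_gint N Γ hN hΓ, ← ENNReal.ofReal_mul (by positivity)] at h1
  have h2 := (mul_le_mul_left hcW _).trans h1
  set H := ∫⁻ x, ENNReal.ofReal (rexp ((y ⬝ᵥ x) / N)) ∂σ with hH
  set B := rexp ((R^2+δ)/(2*N)) * (√(N/(Γ+N))^n * rexp (Γ * (y ⬝ᵥ y) / (2*N*(Γ+N)))) with hB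
  have hB0 : 0 ≤ B := by positivity
  have h3 : c * H.toReal ≤ B := by
    have := ENNReal.toReal_mono ENNReal.ofReal_ne_top h2
    rwa [ENNReal.toReal_mul, ENNReal.toReal_ofReal hc.le, ENNReal.toReal_ofReal hB0] at this
  have h4 : H.toReal ≤ c⁻¹ * B := by
    rw [inv_mul_eq_div, le_div_iff₀ hc]; linarith
  have h5 : ∫ x, w N n y x ∂σ = (2 * π * N) ^ (-(n : ℝ)/2) * rexp (-((y ⬝ᵥ y) + R^2)/(2*N))
      * H.toReal := by
    have e : ∫ x, rexp ((y ⬝ᵥ x) / N) ∂σ = H.toReal := by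
      rw [integral_eq_lintegral_of_nonneg_ae
        (Filter.Eventually.of_forall fun x => (Real.exp_pos _).le) (by fun_prop)]
    rw [← e, ← integral_const_mul]
    refine integral_congr_ae ?_
    filter_upwards [hs] with x hx
    rw [aux_w_eq, hx, mul_assoc ((2 * π * N) ^ (-(n : ℝ)/2)), ← Real.exp_add]
    congr 2
    field_simp; ring
  rw [h5]
  have hp : 0 < (2 * π * N) ^ (-(n : ℝ)/2) := by positivity
  calc _ ≤ (2 * π * N) ^ (-(n : ℝ)/2) * rexp (-((y ⬝ᵥ y) + R^2)/(2*N)) * (c⁻¹ * B) := by gcongr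
    _ = _ := by
      unfold auxPhi
      rw [hB]
      have : rexp (-((y ⬝ᵥ y) + R^2)/(2*N)) * rexp ((R^2+δ)/(2*N)) *
          rexp (Γ * (y ⬝ᵥ y) / (2*N*(Γ+N))) = rexp (δ/(2*N)) * rexp (-(y ⬝ᵥ y) / (2*(Γ+N))) := by
        rw [← Real.exp_add, ← Real.exp_add, ← Real.exp_add]
        congr 1
        field_simp; ring
      linear_combination (2 * π * N) ^ (-(n : ℝ)/2) * c⁻¹ * √(N/(Γ+N))^n * this

lemma aux_pow_int (v : NNReal) (k : ℕ) : Integrable (fun x : ℝ => x^k) (gaussianReal 0 v) := by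
  have := (memLp_id_gaussianReal (μ := 0) (v := v) (k : NNReal)).integrable_norm_pow'
  refine (integrable_norm_iff (by fun_prop)).mp ?_
  simpa using this

lemma aux_g (v a b s : ℝ) (hv : 0 < v) (hs : s ≠ 0) (hsq : s^2 = a^2*v + 2*b^2*v^2) :
    (∫ x, (a*x - b*(x^2-v))/s ∂gaussianReal 0 v.toNNReal = 0) ∧
    (∫ x, ((a*x - b*(x^2-v))/s)^2 ∂gaussianReal 0 v.toNNReal = 1) := by
  obtain ⟨m2, m3, m4⟩ := aux_moments v.toNNReal
  rw [Real.coe_toNNReal _ hv.le] at m2 m4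
  have m1 : ∫ x, x^1 ∂gaussianReal 0 v.toNNReal = 0 := by simp
  have J := aux_pow_int v.toNNReal
  have gen : ∀ c0 c1 c2 c3 c4 : ℝ,
      ∫ x, (c4*x^4 + (c3*x^3 + (c2*x^2 + (c1*x^1 + c0)))) ∂gaussianReal 0 v.toNNReal
        = c4*(3*v^2) + c2*v + c0 := by
    intro c0 c1 c2 c3 c4
    have I0 : Integrable (fun _ : ℝ => c0) (gaussianReal 0 v.toNNReal) := by fun_prop
    have I1 : Integrable (fun x : ℝ => c1*x^1 + c0) (gaussianReal 0 v.toNNReal) :=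
      ((J 1).const_mul c1).add I0
    have I2 : Integrable (fun x : ℝ => c2*x^2 + (c1*x^1 + c0)) (gaussianReal 0 v.toNNReal) :=
      ((J 2).const_mul c2).add I1
    have I3 : Integrable (fun x : ℝ => c3*x^3 + (c2*x^2 + (c1*x^1 + c0)))
      (gaussianReal 0 v.toNNReal) := ((J 3).const_mul c3).add I2
    rw [integral_add ((J 4).const_mul c4) I3, integral_add ((J 3).const_mul c3) I2,
      integral_add ((J 2).const_mul c2) I1, integral_add ((J 1).const_mul c1) I0]
    simp only [integral_const_mul, m1, m2, m3, m4]
    simp; ring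
  constructor
  · have e : ∀ x : ℝ, (a*x - b*(x^2-v))/s
        = 0*x^4 + (0*x^3 + ((-b/s)*x^2 + ((a/s)*x^1 + b*v/s))) := by
      intro x; field_simp; ring
    simp only [e]
    rw [gen]; field_simp; ring
  · have e : ∀ x : ℝ, ((a*x - b*(x^2-v))/s)^2
        = (b^2/s^2)*x^4 + ((-2*a*b/s^2)*x^3 + (((a^2-2*b^2*v)/s^2)*x^2
          + ((2*a*b*v/s^2)*x^1 + b^2*v^2/s^2))) := by
      intro x; field_simp; ring
    simp only [e]
    rw [gen]; field_simp; rw [hsq]; ring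

lemma aux_window (Γ d ε : ℝ) (hΓ : 0 < Γ) (hε : 0 < ε) :
    ∃ c : ℝ, 0 < c ∧ ∀ᶠ n : ℕ in Filter.atTop,
      ENNReal.ofReal c ≤ (Measure.pi fun _ : Fin n => gaussianReal 0 Γ.toNNReal)
        {G | G ⬝ᵥ G ∈ Set.Icc (n * Γ + d * √n) (n * Γ + d * √n + ε * √n)} := by
  have hs2 : 0 < √2 := by positivity
  have hs2' : √2^2 = 2 := Real.sq_sqrt (by norm_num)
  obtain ⟨g0, g1⟩ := aux_g Γ 0 (-1) (Γ*√2) hΓ (by positivity) (by rw [mul_pow, hs2']; ring)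
  set g : ℝ → ℝ := fun x => (0*x - (-1)*(x^2-Γ))/(Γ*√2) with hg
  set lo := d/(Γ*√2) with hlo
  set hi := (d+ε)/(Γ*√2) with hhi
  have hlt : lo < hi := by
    rw [hlo, hhi]; gcongr; linarith
  have hna : NullSingletonClass (gaussianReal 0 1) := nullSingletonClass_gaussianReal (by simp)
  have hclt := aux_clt (gaussianReal 0 Γ.toNNReal) g (by fun_prop) g0 g1 (Set.Icc lo hi)
    measurableSet_Icc (by
      rw [frontier_Icc hlt.le]
      exact Set.Finite.measure_zero (by simp) _)
  set m := gaussianReal 0 1 (Set.Icc lo hi) with hm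
  have hmpos : 0 < m := by
    rw [pos_iff_ne_zero]
    intro h0
    have := gaussianReal_absolutelyContinuous' 0 (v := 1) (by simp) h0
    simp at this
    linarith
  have hmtop : m ≠ ⊤ := measure_ne_top _ _
  refine ⟨m.toReal/2, by have := ENNReal.toReal_pos hmpos.ne' hmtop; positivity, ?_⟩
  have hlt2 : ENNReal.ofReal (m.toReal/2) < m := by
    rw [ENNReal.ofReal_lt_iff_lt_toReal (by positivity) hmtop]
    have := ENNReal.toReal_pos hmpos.ne' hmtop
    linarith
  filter_upwards [hclt.eventually (lt_mem_nhds hlt2), Filter.eventually_gt_atTop 0] with n hn hn0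
  refine hn.le.trans (measure_mono ?_)
  intro G hG
  have hnp : (0:ℝ) < √n := by positivity
  have hsq : √n * √n = (n:ℝ) := Real.mul_self_sqrt (by positivity)
  have hsum : ∑ i, g (G i) = ((G ⬝ᵥ G) / Γ - n) / √2 := by
    simp only [hg, dotProduct]
    rw [← Finset.sum_div]
    simp only [zero_mul, zero_sub, neg_mul, one_mul, neg_neg, Finset.sum_sub_distrib]
    simp [sq]
    field_simp
  simp only [Set.mem_ofPred_eq, hsum, hlo, hhi, Set.mem_Icc] at hG ⊢
  obtain ⟨h1, h2⟩ := hG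
  have e : (√n)⁻¹ * (((G ⬝ᵥ G) / Γ - n) / √2) = ((G ⬝ᵥ G) - n*Γ)/√n/(Γ*√2) := by
    field_simp
  rw [e] at h1 h2
  rw [div_le_div_iff_of_pos_right (by positivity)] at h1 h2
  rw [le_div_iff₀ hnp] at h1
  rw [div_le_iff₀ hnp] at h2
  constructor <;> linarith

lemma aux_cheb (N τ : ℝ) (hN : 0 < N) (hτ : 0 < τ) (n : ℕ) (hn : 0 < n) :
    (Measure.pi fun _ : Fin n => gaussianReal 0 N.toNNReal) {z | τ * n ≤ |∑ i, z i|}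
      ≤ ENNReal.ofReal (N / τ^2 / n) := by
  set γ := Measure.pi fun _ : Fin n => gaussianReal 0 N.toNNReal
  have hmem : ∀ i : Fin n, MemLp (fun z : Fin n → ℝ => z i) 2 γ := fun i =>
    (memLp_id_gaussianReal (μ := 0) (v := N.toNNReal) 2).comp_measurePreserving
      (measurePreserving_eval (fun _ : Fin n => gaussianReal 0 N.toNNReal) i)
  have hX : MemLp (∑ i, fun z : Fin n → ℝ => z i) 2 γ := memLp_finsetSum' _ fun i _ => hmem i
  have hvar : Var[∑ i, fun z : Fin n → ℝ => z i; γ] = n * N := by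
    rw [variance_sum_pi (X := fun _ x => x) (fun i => memLp_id_gaussianReal 2)]
    simp [variance_fun_id_gaussianReal, hN.le]
  have hmean : γ[∑ i, fun z : Fin n → ℝ => z i] = 0 := by
    simp only [Finset.sum_apply]
    rw [integral_finsetSum _ fun i _ => (hmem i).integrable (by norm_num)]
    refine Finset.sum_eq_zero fun i _ => ?_
    rw [integral_eval]
    simp
  have hn' : (0:ℝ) < n := by exact_mod_cast hn
  have := meas_ge_le_variance_div_sq hX (c := τ * n) (by positivity)
  rw [hvar, hmean] at this
  simp only [Finset.sum_apply, sub_zero] at this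
  refine this.trans (ENNReal.ofReal_le_ofReal (le_of_eq ?_))
  field_simp

lemma aux_gap (N Γ Γn d ρ S : ℝ) (n : ℕ) (hN : 0 < N) (hΓ : 0 < Γ) (hΓn : 0 ≤ Γn) (hn : 0 < n)
    (hρ0 : 0 < ρ) (hΓeq : n * Γn = n * Γ + d * √n)
    (hz2 : |S| < ρ * (√Γ * (Γ+N)) / (|d|+1) * n) :
    |(√Γn - √Γ) * S / (Γ+N)| ≤ ρ * √n := by
  have hsG : 0 < √Γ := by positivity
  have hnp : (0:ℝ) < √n := by positivity
  have hnsq : √n * √n = (n:ℝ) := Real.mul_self_sqrt (by positivity)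
  have e3 : ρ * (√Γ * (Γ+N)) / (|d|+1) * (|d|+1) = ρ * (√Γ * (Γ+N)) := by field_simp
  have hτ0 : 0 < ρ * (√Γ * (Γ+N)) / (|d|+1) := by positivity
  generalize ρ * (√Γ * (Γ+N)) / (|d|+1) = τ at *
  have e1 : (√Γn - √Γ) * (√Γn + √Γ) = d / √n := by
    have h1 := Real.mul_self_sqrt hΓn
    have h2 := Real.mul_self_sqrt hΓ.le
    have : (√Γn - √Γ) * (√Γn + √Γ) = Γn - Γ := by linear_combination h1 - h2
    rw [this, eq_div_iff hnp.ne']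
    have h4 : √n * ((Γn - Γ) * √n) = √n * d := by linear_combination hΓeq + (Γn-Γ) * hnsq
    exact mul_left_cancel₀ hnp.ne' h4
  have e2 : |√Γn - √Γ| * √Γ ≤ |d| / √n := by
    have : |√Γn - √Γ| * (√Γn + √Γ) = |d| / √n := by
      rw [← abs_of_nonneg (show 0 ≤ √Γn + √Γ by positivity), ← abs_mul, e1, abs_div,
        abs_of_pos hnp]
    rw [← this]
    have := Real.sqrt_nonneg Γn
    gcongr
    linarith
  rw [abs_div, abs_mul, abs_of_pos (show 0 < Γ + N by positivity),
    div_le_iff₀ (by positivity)]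
  have e4 : |√Γn - √Γ| * √Γ * |S| ≤ |d| / √n * (τ * n) := by gcongr
  have e5 : |d| / √n * (τ * n) = |d| * τ * √n := by
    rw [div_mul_eq_mul_div, div_eq_iff hnp.ne']; linear_combination (-(|d| * τ)) * hnsq
  have e6 : |d| * τ * √n + τ * √n = ρ * √n * (Γ+N) * √Γ := by
    linear_combination √n * e3
  have e8 : 0 ≤ τ * √n := by positivity
  have e7 : (|√Γn - √Γ| * |S|) * √Γ ≤ (ρ * √n * (Γ+N)) * √Γ := by linarith
  exact le_of_mul_le_mul_right e7 hsG

set_option maxHeartbeats 1000000 in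
lemma aux_tail (N Γ d κ s t : ℝ) (hN : 0 < N) (hΓ : 0 < Γ) (hs : 0 < s)
    (hsq : s^2 = (Γ^2 + 2*Γ*N) / (2 * (N + Γ)^2)) (ht : κ - d/(2*(Γ+N)) < s * t)
    (η : ENNReal) (hη : 0 < η) :
    ∀ᶠ n : ℕ in Filter.atTop, ∀ Γn : ℝ, 0 ≤ Γn → n * Γn = n * Γ + d * √n →
      ∀ x : Fin n → ℝ, x ⬝ᵥ x = n * Γn →
      (Measure.pi fun _ : Fin n => gaussianReal 0 N.toNNReal)
        {z | (n * Γn + 2 * (x ⬝ᵥ z) + z ⬝ᵥ z)/(2*(Γ+N)) - (z ⬝ᵥ z)/(2*N) ≤ κ * √n}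
      ≤ gaussianReal 0 1 (Set.Iic t) + η := by
  set a := √Γ/(Γ+N) with ha
  set b := Γ/(2*N*(Γ+N)) with hb
  have hsG : 0 < √Γ := by positivity
  have hsG2 : √Γ^2 = Γ := Real.sq_sqrt hΓ.le
  obtain ⟨g0, g1⟩ := aux_g N a b s hN hs.ne' (by
    rw [hsq, ha, hb, div_pow, hsG2]; field_simp; ring)
  set g : ℝ → ℝ := fun x => (a*x - b*(x^2-N))/s with hg
  have hna : NullSingletonClass (gaussianReal 0 1) := nullSingletonClass_gaussianReal (by simp)
  have hclt := aux_clt (gaussianReal 0 N.toNNReal) g (by fun_prop) g0 g1 (Set.Iic t)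
    measurableSet_Iic (by rw [frontier_Iic]; simp)
  set ρ := s * t - (κ - d/(2*(Γ+N))) with hρ
  have hρ0 : 0 < ρ := by rw [hρ]; linarith
  set τ := ρ * (√Γ * (Γ+N)) / (|d|+1) with hτ
  have hτ0 : 0 < τ := by positivity
  have hη2 : 0 < η/2 := by simpa using hη.ne'
  have hev1 : ∀ᶠ n : ℕ in Filter.atTop, (Measure.pi fun _ : Fin n => gaussianReal 0 N.toNNReal)
      {z | (√n)⁻¹ * ∑ i, g (z i) ∈ Set.Iic t} ≤ gaussianReal 0 1 (Set.Iic t) + η/2 := by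
    have : gaussianReal 0 1 (Set.Iic t) < gaussianReal 0 1 (Set.Iic t) + η/2 :=
      ENNReal.lt_add_right (measure_ne_top _ _) hη2.ne'
    exact (hclt.eventually (gt_mem_nhds this)).mono fun n hn => hn.le
  have hev2 : ∀ᶠ n : ℕ in Filter.atTop, ENNReal.ofReal (N / τ^2 / n) ≤ η/2 := by
    have h1 : Filter.Tendsto (fun n : ℕ => ENNReal.ofReal (N / τ^2 / n)) Filter.atTop (nhds 0) := by
      rw [← ENNReal.ofReal_zero]
      exact ENNReal.tendsto_ofReal (tendsto_const_div_atTop_nhds_zero_nat _)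
    exact (h1.eventually (gt_mem_nhds hη2)).mono fun n hn => hn.le
  filter_upwards [hev1, hev2, Filter.eventually_gt_atTop 0] with n h1 h2 hn Γn hΓn hΓeq x hx
  have hnp : (0:ℝ) < √n := by positivity
  have hn' : (0:ℝ) < n := by exact_mod_cast hn
  have hnsq : √n * √n = (n:ℝ) := Real.mul_self_sqrt (by positivity)
  set γ := Measure.pi fun _ : Fin n => gaussianReal 0 N.toNNReal with hγ
  set x0 : Fin n → ℝ := fun _ => √Γn with hx0
  have hx0x : x ⬝ᵥ x = x0 ⬝ᵥ x0 := by
    rw [hx]; simp [hx0, dotProduct, Real.mul_self_sqrt hΓn]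
  set D : Set (ℝ × ℝ) := {q | (n * Γn + 2 * q.1 + q.2)/(2*(Γ+N)) - q.2/(2*N) ≤ κ * √n} with hD
  have hDm : MeasurableSet D := measurableSet_le (by fun_prop) (by fun_prop)
  have hrot := aux_inv_lintegral γ (aux_gauss_rot _) (fun u v => D.indicator 1 (u, v))
    ((measurable_const (a := (1 : ENNReal))).indicator hDm) x x0 hx0x
  have hmeas : ∀ u : Fin n → ℝ, ∫⁻ z, D.indicator 1 (u ⬝ᵥ z, z ⬝ᵥ z) ∂γ
      = γ {z | (u ⬝ᵥ z, z ⬝ᵥ z) ∈ D} := by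
    intro u
    have hm : Measurable fun z : Fin n → ℝ => (u ⬝ᵥ z, z ⬝ᵥ z) :=
      ((Continuous.dotProduct continuous_const continuous_id).prodMk
        (Continuous.dotProduct continuous_id continuous_id)).measurable
    exact lintegral_indicator_one (μ := γ) (hm hDm)
  rw [hmeas, hmeas] at hrot
  have hset : {z : Fin n → ℝ | (n * Γn + 2 * (x ⬝ᵥ z) + z ⬝ᵥ z)/(2*(Γ+N)) - (z ⬝ᵥ z)/(2*N)
      ≤ κ * √n} = {z | (x ⬝ᵥ z, z ⬝ᵥ z) ∈ D} := rfl
  rw [hset, hrot]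
  have hsub : {z : Fin n → ℝ | (x0 ⬝ᵥ z, z ⬝ᵥ z) ∈ D} ⊆
      {z | (√n)⁻¹ * ∑ i, g (z i) ∈ Set.Iic t} ∪ {z | τ * n ≤ |∑ i, z i|} := by
    intro z hz
    by_cases hz2 : τ * n ≤ |∑ i, z i|
    · exact Or.inr hz2
    left
    push Not at hz2
    have hz : (n * Γn + 2 * (x0 ⬝ᵥ z) + z ⬝ᵥ z)/(2*(Γ+N)) - (z ⬝ᵥ z)/(2*N) ≤ κ * √n := hz
    have hdot : x0 ⬝ᵥ z = √Γn * ∑ i, z i := by simp [hx0, dotProduct, Finset.mul_sum]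
    have hsum : ∑ i, g (z i) = (a * ∑ i, z i - b * ((z ⬝ᵥ z) - n * N))/s := by
      simp only [hg, dotProduct]
      rw [← Finset.sum_div, Finset.sum_sub_distrib, ← Finset.mul_sum, ← Finset.mul_sum,
        Finset.sum_sub_distrib]
      simp [sq]
    set S := ∑ i, z i with hS
    set Q := z ⬝ᵥ z with hQ
    have hgap := aux_gap N Γ Γn d ρ S n hN hΓ hΓn hn hρ0 hΓeq hz2
    have hge := (abs_le.mp hgap).1
    have hmain : a * S - b * (Q - n * N) ≤ s * t * √n := by
      have e : (n * Γn + 2 * (x0 ⬝ᵥ z) + Q)/(2*(Γ+N)) - Q/(2*N)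
          = a * S - b * (Q - n * N) + (√Γn - √Γ) * S / (Γ+N) + d/(2*(Γ+N)) * √n := by
        rw [hΓeq, hdot, ha, hb]; field_simp; ring
      rw [e] at hz
      have : s * t * √n = κ * √n - d/(2*(Γ+N)) * √n + ρ * √n := by rw [hρ]; ring
      linarith
    change (√n)⁻¹ * ∑ i, g (z i) ≤ t
    rw [hsum, inv_mul_le_iff₀ hnp, div_le_iff₀ hs]
    linarith
  calc _ ≤ _ := measure_mono hsub
    _ ≤ _ := measure_union_le _ _
    _ ≤ (gaussianReal 0 1 (Set.Iic t) + η/2) + η/2 :=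
      add_le_add h1 ((aux_cheb N τ hN hτ0 n hn).trans h2)
    _ = _ := by rw [add_assoc, ENNReal.add_halves]

lemma aux_w_int (N : ℝ) (hN : 0 < N) {n : ℕ} (y : Fin n → ℝ) (P : Measure (Fin n → ℝ))
    [IsFiniteMeasure P] : Integrable (fun x => w N n y x) P := by
  have hc : Continuous fun x => w N n y x := by unfold w; fun_prop
  refine Integrable.of_bound hc.aestronglyMeasurable ((2 * π * N) ^ (-(n : ℝ)/2)) ?_
  refine Filter.Eventually.of_forall fun x => ?_
  have hp : 0 < (2 * π * N) ^ (-(n : ℝ)/2) := by positivity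
  have h1 : rexp (-(∑ i, (y i - x i)^2) / (2 * N)) ≤ 1 := by
    rw [Real.exp_le_one_iff, neg_div]
    have : 0 ≤ (∑ i, (y i - x i)^2) / (2 * N) := by positivity
    linarith
  have h2 := Real.exp_pos (-(∑ i, (y i - x i)^2) / (2 * N))
  unfold w
  rw [Real.norm_eq_abs, abs_of_pos (by positivity)]
  exact mul_le_of_le_one_right hp.le h1

lemma aux_w_pos (N : ℝ) (hN : 0 < N) {n : ℕ} (y x : Fin n → ℝ) : 0 < w N n y x := by
  unfold w; positivity

lemma aux_q_pos (N : ℝ) (hN : 0 < N) {n : ℕ} (y : Fin n → ℝ) (P : Measure (Fin n → ℝ))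
    [IsProbabilityMeasure P] : 0 < ∫ x, w N n y x ∂P := by
  rw [integral_pos_iff_support_of_nonneg (fun x => (aux_w_pos N hN y x).le) (aux_w_int N hN y P)]
  have : Function.support (fun x => w N n y x) = Set.univ := by
    ext x; simp [(aux_w_pos N hN y x).ne']
  rw [this]; simp

lemma aux_log (N Γ : ℝ) (hN : 0 < N) (hΓ : 0 < Γ) {n : ℕ} (x z : Fin n → ℝ) :
    Real.log (w N n (x+z) x) - Real.log (auxPhi N Γ n (x+z))
      = n * ((1/2) * Real.log (1 + Γ/N)) +
        ((x ⬝ᵥ x + 2 * (x ⬝ᵥ z) + z ⬝ᵥ z)/(2*(Γ+N)) - (z ⬝ᵥ z)/(2*N)) := by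
  have hp : 0 < (2 * π * N) ^ (-(n : ℝ)/2) := by positivity
  have hq : 0 < N/(Γ+N) := by positivity
  have h1 : Real.log (w N n (x+z) x)
      = Real.log ((2 * π * N) ^ (-(n : ℝ)/2)) + -(z ⬝ᵥ z)/(2*N) := by
    unfold w
    rw [Real.log_mul hp.ne' (Real.exp_pos _).ne', Real.log_exp]
    simp [dotProduct, sq]
  have h2 : Real.log (auxPhi N Γ n (x+z)) = Real.log ((2 * π * N) ^ (-(n : ℝ)/2))
      + (n * (Real.log (N/(Γ+N)) / 2) + -((x+z) ⬝ᵥ (x+z)) / (2*(Γ+N))) := by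
    unfold auxPhi
    rw [Real.log_mul hp.ne' (by positivity), Real.log_mul (by positivity) (Real.exp_pos _).ne',
      Real.log_exp, Real.log_pow, Real.log_sqrt hq.le]
  have h3 : Real.log (1 + Γ/N) = - Real.log (N/(Γ+N)) := by
    rw [← Real.log_inv]; congr 1; field_simp; ring
  have h4 : (x+z) ⬝ᵥ (x+z) = x ⬝ᵥ x + 2 * (x ⬝ᵥ z) + z ⬝ᵥ z := by
    rw [add_dotProduct, dotProduct_add, dotProduct_add, dotProduct_comm z x]; ring
  rw [h1, h2, h3, h4]; ring

lemma aux_step (N Γ r ε : ℝ) (hN : 0 < N) (hΓ : 0 < Γ) (n : ℕ) (hn : 0 < n)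
    (p : Fin 3 → ℝ) (hp : ∀ j, 0 ≤ p j) (hpsum : ∑ j, p j = 1)
    (σ : Fin 3 → Measure (Fin n → ℝ)) (hσ : ∀ j, IsProbabilityMeasure (σ j))
    (Γj : Fin 3 → ℝ) (hs : ∀ j, ∀ᵐ x ∂(σ j), x ⬝ᵥ x = n * Γj j)
    (K : ℝ) (hK : 0 < K) (hKl : Real.log K ≤ ε * √n)
    (hq : ∀ j y, ∫ x, w N n y x ∂(σ j) ≤ K * auxPhi N Γ n y)
    (B : Fin 3 → ENNReal)
    (hB : ∀ j, ∀ x : Fin n → ℝ, x ⬝ᵥ x = n * Γj j →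
      (Measure.pi fun _ : Fin n => gaussianReal 0 N.toNNReal)
        {z | (n * Γj j + 2 * (x ⬝ᵥ z) + z ⬝ᵥ z)/(2*(Γ+N)) - (z ⬝ᵥ z)/(2*N) ≤ (r + ε) * √n}
      ≤ B j)
    (P : Measure (Fin n → ℝ)) (hP : P = ∑ j, ENNReal.ofReal (p j) • σ j) :
    (P.prod (Measure.pi fun _ : Fin n => gaussianReal 0 N.toNNReal))
      {pr : (Fin n → ℝ) × (Fin n → ℝ) |
        (1/(n : ℝ)) * Real.log (w N n (pr.1 + pr.2) pr.1 / ∫ x, w N n (pr.1 + pr.2) x ∂P)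
          ≤ (1/2) * Real.log (1 + Γ/N) + r / √n}
      ≤ ∑ j, ENNReal.ofReal (p j) * B j := by
  have hPp : IsProbabilityMeasure P := by
    constructor
    rw [hP]
    simp only [Measure.coe_finsetSum, Finset.sum_apply, Measure.smul_apply, measure_univ,
      smul_eq_mul, mul_one]
    rw [← ENNReal.ofReal_sum_of_nonneg fun j _ => hp j, hpsum, ENNReal.ofReal_one]
  have hqP : ∀ y, ∫ x, w N n y x ∂P ≤ K * auxPhi N Γ n y := by
    intro y
    have e : ∫ x, w N n y x ∂P = ∑ j, p j * ∫ x, w N n y x ∂(σ j) := by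
      rw [hP, integral_finsetSum_measure]
      · refine Finset.sum_congr rfl fun j _ => ?_
        rw [integral_smul_measure, ENNReal.toReal_ofReal (hp j), smul_eq_mul]
      · intro j _
        exact (aux_w_int N hN y (σ j)).smul_measure ENNReal.ofReal_ne_top
    rw [e]
    calc _ ≤ ∑ j, p j * (K * auxPhi N Γ n y) :=
          Finset.sum_le_sum fun j _ => mul_le_mul_of_nonneg_left (hq j y) (hp j)
      _ = _ := by rw [← Finset.sum_mul, hpsum, one_mul]
  set γ := Measure.pi fun _ : Fin n => gaussianReal 0 N.toNNReal with hγ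
  set E : Set ((Fin n → ℝ) × (Fin n → ℝ)) := {pr |
    (pr.1 ⬝ᵥ pr.1 + 2 * (pr.1 ⬝ᵥ pr.2) + pr.2 ⬝ᵥ pr.2)/(2*(Γ+N)) - (pr.2 ⬝ᵥ pr.2)/(2*N)
      ≤ (r + ε) * √n} with hE
  have hEm : MeasurableSet E := by
    refine measurableSet_le ?_ measurable_const
    simp only [dotProduct]
    fun_prop
  have hn' : (0:ℝ) < n := by exact_mod_cast hn
  have hnp : (0:ℝ) < √n := by positivity
  have hnsq : √n * √n = (n:ℝ) := Real.mul_self_sqrt (by positivity)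
  refine (measure_mono (t := E) ?_).trans ?_
  · rintro ⟨x, z⟩ h
    have h : (1/(n : ℝ)) * Real.log (w N n (x + z) x / ∫ x', w N n (x + z) x' ∂P)
          ≤ (1/2) * Real.log (1 + Γ/N) + r / √n := h
    change (x ⬝ᵥ x + 2 * (x ⬝ᵥ z) + z ⬝ᵥ z)/(2*(Γ+N)) - (z ⬝ᵥ z)/(2*N) ≤ (r + ε) * √n
    have q0 := aux_q_pos N hN (x+z) P
    have hphi : 0 < auxPhi N Γ n (x+z) := by unfold auxPhi; positivity
    have h2 := Real.log_le_log q0 (hqP (x+z))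
    rw [Real.log_mul hK.ne' hphi.ne'] at h2
    rw [Real.log_div (aux_w_pos N hN _ _).ne' q0.ne', one_div, inv_mul_le_iff₀ hn'] at h
    have h3 := aux_log N Γ hN hΓ x z
    have h4 : (n:ℝ) * (r / √n) = r * √n := by
      rw [mul_div_assoc', div_eq_iff hnp.ne']; linear_combination (-r) * hnsq
    rw [mul_add, h4] at h
    linarith
  · rw [Measure.prod_apply hEm, hP, lintegral_finsetSum_measure]
    refine Finset.sum_le_sum fun j _ => ?_
    rw [lintegral_smul_measure, smul_eq_mul]
    gcongr
    calc _ ≤ ∫⁻ x, B j ∂(σ j) := by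
          refine lintegral_mono_ae ?_
          filter_upwards [hs j] with x hx
          refine le_trans (le_of_eq ?_) (hB j x hx)
          rw [← hx]; rfl
      _ = B j := by simp

lemma aux_Phi_rc (x : ℝ) : Filter.Tendsto (fun τ => Phi (x + τ)) (nhdsWithin 0 (Set.Ioi 0))
    (nhds (Phi x)) := by
  have h : ∀ y, Phi y = cdf (gaussianReal 0 1) y := by
    intro y; rw [cdf_eq_real]; rfl
  simp only [h]
  have h1 := (cdf (gaussianReal 0 1)).right_continuous x
  refine Filter.Tendsto.comp h1 ?_
  refine tendsto_nhdsWithin_of_tendsto_nhds_of_eventually_within _ ?_ ?_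
  · have : Continuous fun τ : ℝ => x + τ := by fun_prop
    have := this.tendsto 0
    rw [add_zero] at this
    exact this.mono_left nhdsWithin_le_nhds
  · filter_upwards [self_mem_nhdsWithin] with τ hτ
    have : 0 < τ := hτ
    change x ≤ x + τ
    linarith

lemma aux_event (N Γ r : ℝ) (hN : 0 < N) (hΓ : 0 < Γ)
    (CΓ Cp VΓ : ℝ) (hCΓ : CΓ = (1/2) * Real.log (1 + Γ/N))
    (hCp : Cp = 1 / (2 * (Γ + N)))
    (hVΓ : VΓ = (Γ^2 + 2*Γ*N) / (2 * (N + Γ)^2))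
    (σ : ∀ n : ℕ, ℝ → Measure (Fin n → ℝ)) (hσ : UniformSphereFamily σ)
    (p πv : Fin 3 → ℝ) (hp : ∀ j, 0 ≤ p j) (hpsum : ∑ j, p j = 1) (τ : ℝ) (hτ : 0 < τ) :
    ∀ᶠ n : ℕ in Filter.atTop,
        (((Pmix σ Γ VΓ Cp r p πv n).prod
            (Measure.pi fun _ : Fin n => gaussianReal 0 N.toNNReal))
          {pr : (Fin n → ℝ) × (Fin n → ℝ) |
            (1/(n : ℝ)) * Real.log (w N n (pr.1 + pr.2) pr.1 /
                ∫ x, w N n (pr.1 + pr.2) x ∂(Pmix σ Γ VΓ Cp r p πv n))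
              ≤ CΓ + r / Real.sqrt n}).toReal
    ≤ ∑ j, p j * (Phi (πv j + τ) + τ) := by
  have hV0 : 0 < VΓ := by rw [hVΓ]; positivity
  have hC0 : 0 < Cp := by rw [hCp]; positivity
  set s := √VΓ with hs
  have hs0 : 0 < s := by positivity
  have hsq : s^2 = (Γ^2 + 2*Γ*N) / (2 * (N + Γ)^2) := by rw [hs, Real.sq_sqrt hV0.le, hVΓ]
  set ε := s * τ / 2 with hε
  have hε0 : 0 < ε := by positivity
  set d : Fin 3 → ℝ := fun j => (r - s * πv j)/Cp with hd
  have hGJ : ∀ (j : Fin 3) (n : ℕ), 0 < n → (n:ℝ) * GammaJ Γ VΓ Cp r (πv j) n = n * Γ + d j * √n := by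
    intro j n hn
    have hnp : (0:ℝ) < √n := by positivity
    have hnsq : √n ^ 2 = (n:ℝ) := Real.sq_sqrt (by positivity)
    have : GammaJ Γ VΓ Cp r (πv j) n = Γ + d j / √n := by
      simp only [GammaJ, hd, ← hs]; field_simp; ring
    rw [this, mul_add]
    congr 1
    rw [mul_div_assoc', div_eq_iff hnp.ne']; linear_combination (-(d j)) * hnsq
  choose c hc0 hc using fun j => aux_window Γ (d j) (ε * N) hΓ (by positivity)
  have htail := fun j => aux_tail N Γ (d j) (r + ε) s (πv j + τ) hN hΓ hs0 hsq (by
    have : d j / (2*(Γ+N)) = r - s * πv j := by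
      have h1 : d j / (2*(Γ+N)) = d j * Cp := by rw [hCp]; ring
      rw [h1, hd]; field_simp
    rw [this, hε]
    have : 0 < s * τ := by positivity
    linarith) (ENNReal.ofReal τ) (by simpa using hτ)
  have hpos : ∀ j, ∀ᶠ n : ℕ in Filter.atTop, 0 < (n:ℝ) * Γ + d j * √n := by
    intro j
    have h1 : Filter.Tendsto (fun n : ℕ => √(n:ℝ)) Filter.atTop Filter.atTop :=
      Real.tendsto_sqrt_atTop.comp tendsto_natCast_atTop_atTop
    filter_upwards [h1.eventually_gt_atTop (|d j| / Γ), Filter.eventually_gt_atTop 0] with n hn hn0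
    have hnp : (0:ℝ) < √n := by positivity
    have hnsq : √n ^ 2 = (n:ℝ) := Real.sq_sqrt (by positivity)
    rw [div_lt_iff₀ hΓ] at hn
    have h2 := neg_abs_le (d j)
    have h3 : 0 < √n * (√n * Γ + d j) := mul_pos hnp (by linarith)
    have h4 : √n * (√n * Γ + d j) = (n:ℝ) * Γ + d j * √n := by linear_combination Γ * hnsq
    linarith
  set K0 := ∑ j, (c j)⁻¹ with hK0
  have hK00 : 0 < K0 := Finset.sum_pos (fun j _ => inv_pos.mpr (hc0 j)) Finset.univ_nonempty
  have hlogev : ∀ᶠ n : ℕ in Filter.atTop, Real.log K0 ≤ ε / 2 * √n := by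
    have h1 : Filter.Tendsto (fun n : ℕ => ε / 2 * √(n:ℝ)) Filter.atTop Filter.atTop :=
      (Real.tendsto_sqrt_atTop.comp tendsto_natCast_atTop_atTop).const_mul_atTop (by positivity)
    exact h1.eventually_ge_atTop _
  filter_upwards [Filter.eventually_all.mpr hc, Filter.eventually_all.mpr htail,
    Filter.eventually_all.mpr hpos, hlogev, Filter.eventually_gt_atTop 0]
    with n hcn htn hpn hln hn
  have hn' : (0:ℝ) < n := by exact_mod_cast hn
  have hg0 : ∀ j, 0 < (n:ℝ) * GammaJ Γ VΓ Cp r (πv j) n := fun j => by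
    rw [hGJ j n hn]; exact hpn j
  have hR2 : ∀ j, √((n:ℝ) * GammaJ Γ VΓ Cp r (πv j) n)^2 = (n:ℝ) * GammaJ Γ VΓ Cp r (πv j) n :=
    fun j => Real.sq_sqrt (hg0 j).le
  have hR0 : ∀ j, 0 < √((n:ℝ) * GammaJ Γ VΓ Cp r (πv j) n) := fun j => Real.sqrt_pos.mpr (hg0 j)
  have hU := fun j => hσ n hn _ (hR0 j)
  have hsup : ∀ j, ∀ᵐ x ∂(σ n (√((n:ℝ) * GammaJ Γ VΓ Cp r (πv j) n))),
      x ⬝ᵥ x = √((n:ℝ) * GammaJ Γ VΓ Cp r (πv j) n)^2 := by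
    intro j
    have h1 : ∀ᵐ x ∂(σ n (√((n:ℝ) * GammaJ Γ VΓ Cp r (πv j) n))),
      ∑ i, (x i)^2 = √((n:ℝ) * GammaJ Γ VΓ Cp r (πv j) n)^2 := (hU j).2.1
    filter_upwards [h1] with x hx
    rw [← hx]; simp [dotProduct, sq]
  have hmain := aux_step N Γ r ε hN hΓ n hn p hp hpsum
    (fun j => σ n (√((n:ℝ) * GammaJ Γ VΓ Cp r (πv j) n))) (fun j => (hU j).1)
    (fun j => GammaJ Γ VΓ Cp r (πv j) n)
    (fun j => (hsup j).mono fun x hx => hx.trans (hR2 j))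
    (K0 * rexp (ε * N * √n / (2*N))) (by positivity)
    (by
      rw [Real.log_mul hK00.ne' (Real.exp_pos _).ne', Real.log_exp]
      have : ε * N * √n / (2*N) = ε / 2 * √n := by field_simp
      rw [this]; linarith)
    (fun j y => by
      have := (hU j).1
      have h1 := aux_q_le (σ n (√((n:ℝ) * GammaJ Γ VΓ Cp r (πv j) n))) (hU j).2.2 _ (hR0 j)
        (hsup j) N Γ hN hΓ (ε * N * √n) (c j) (hc0 j) (by
          rw [hR2 j, hGJ j n hn]; exact hcn j) y
      refine h1.trans ?_
      have hphi : 0 < auxPhi N Γ n y := by unfold auxPhi; positivity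
      have : (c j)⁻¹ ≤ K0 := Finset.single_le_sum (f := fun j => (c j)⁻¹)
        (fun i _ => (inv_pos.mpr (hc0 i)).le) (Finset.mem_univ j)
      gcongr)
    (fun j => gaussianReal 0 1 (Set.Iic (πv j + τ)) + ENNReal.ofReal τ)
    (fun j x hx => htn j _ (by
      have := hg0 j
      exact (pos_of_mul_pos_right this hn'.le).le) (hGJ j n hn) x hx)
    (Pmix σ Γ VΓ Cp r p πv n) rfl
  rw [hCΓ]
  have htop : ∀ j, gaussianReal 0 1 (Set.Iic (πv j + τ)) + ENNReal.ofReal τ ≠ ⊤ :=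
    fun j => ENNReal.add_ne_top.mpr ⟨measure_ne_top _ _, ENNReal.ofReal_ne_top⟩
  have hfin := ENNReal.toReal_mono (by
    rw [ENNReal.sum_ne_top]
    exact fun j _ => ENNReal.mul_ne_top ENNReal.ofReal_ne_top (htop j)) hmain
  refine hfin.trans (le_of_eq ?_)
  rw [ENNReal.toReal_sum fun j _ => ENNReal.mul_ne_top ENNReal.ofReal_ne_top (htop j)]
  refine Finset.sum_congr rfl fun j _ => ?_
  rw [ENNReal.toReal_mul, ENNReal.toReal_ofReal (hp j),
    ENNReal.toReal_add (measure_ne_top _ _) ENNReal.ofReal_ne_top, ENNReal.toReal_ofReal hτ.le]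
  rfl

/-- achievability, main estimate: for the three-sphere mixture input,
`limsup_n Pr((1/n)·log(w(Y|X)/qₙ(Y)) ≤ C(Γ) + r/√n) ≤ Σⱼ pⱼ Φ(πⱼ)`. -/
theorem achievability_limsup (N Γ V r : ℝ) (hN : 0 < N) (hΓ : 0 < Γ) (hV : 0 ≤ V)
    (CΓ Cp VΓ : ℝ) (hCΓ : CΓ = (1/2) * Real.log (1 + Γ/N))
    (hCp : Cp = 1 / (2 * (Γ + N)))
    (hVΓ : VΓ = (Γ^2 + 2*Γ*N) / (2 * (N + Γ)^2))
    (σ : ∀ n : ℕ, ℝ → Measure (Fin n → ℝ)) (hσ : UniformSphereFamily σ)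
    (p πv : Fin 3 → ℝ) (hp : ∀ j, 0 ≤ p j) (hpsum : ∑ j, p j = 1)
    (hmean : ∑ j, p j * πv j = r / Real.sqrt VΓ)
    (hvar : ∑ j, p j * (πv j)^2 - (r / Real.sqrt VΓ)^2 ≤ Cp^2 * V / VΓ) :
    Filter.limsup (fun n : ℕ =>
        (((Pmix σ Γ VΓ Cp r p πv n).prod
            (Measure.pi fun _ : Fin n => gaussianReal 0 N.toNNReal))
          {pr : (Fin n → ℝ) × (Fin n → ℝ) |
            (1/(n : ℝ)) * Real.log (w N n (pr.1 + pr.2) pr.1 /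
                ∫ x, w N n (pr.1 + pr.2) x ∂(Pmix σ Γ VΓ Cp r p πv n))
              ≤ CΓ + r / Real.sqrt n}).toReal)
      Filter.atTop
    ≤ ∑ j, p j * Phi (πv j) := by
  have hlim : Filter.Tendsto (fun τ : ℝ => ∑ j, p j * (Phi (πv j + τ) + τ))
      (nhdsWithin 0 (Set.Ioi 0)) (nhds (∑ j, p j * (Phi (πv j) + 0))) := by
    refine tendsto_finsetSum _ fun j _ => ?_
    refine Filter.Tendsto.const_mul _ (Filter.Tendsto.add (aux_Phi_rc _) ?_)
    exact Filter.tendsto_id.mono_left nhdsWithin_le_nhds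
  simp only [add_zero] at hlim
  refine ge_of_tendsto hlim ?_
  filter_upwards [self_mem_nhdsWithin] with τ hτ
  refine Filter.limsup_le_of_le ?_
    (aux_event N Γ r hN hΓ CΓ Cp VΓ hCΓ hCp hVΓ σ hσ p πv hp hpsum τ hτ)
  exact Filter.isCoboundedUnder_le_of_le _ (x := 0) fun n => ENNReal.toReal_nonneg
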